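/- Let F be a logarithmically homogeneous barrier with negative curvature for a regular cone K ⊂ ℝⁿ. Then for all x, y ∈ int K, F''(y) ⪯ σ_y(x)²·F''(x). In particular, if y − x ∈ K, then σ_y(x) ≤ 1 and therefore F''(y) ⪯ F''(x). -/

import Mathlib

open scoped RealInnerProductSpace
open Set

noncomputable section

variable {E : Type*} [NormedAddCommGroup E] [InnerProductSpace ℝ E] [CompleteSpace E]

/-- The dual cone `K* = {s : ⟨s,x⟩ ≥ 0 for all x ∈ K}`. -/
def dualCone (K : Set E) : Set E := {s | ∀ x ∈ K, 0 ≤ ⟪s, x⟫}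

/-- `K` is a regular cone: closed, convex, a cone, pointed, with nonempty interior. -/
def IsRegularCone (K : Set E) : Prop :=
  IsClosed K ∧ Convex ℝ K ∧ (∀ x ∈ K, ∀ t : ℝ, 0 ≤ t → t • x ∈ K) ∧
    (∀ x, x ∈ K → -x ∈ K → x = 0) ∧ (interior K).Nonempty

/-- The Minkowski gauge `σ_x(h) = inf {β ≥ 0 : β • x - h ∈ K}`. -/
def mink (K : Set E) (x h : E) : ℝ := sInf {β : ℝ | 0 ≤ β ∧ β • x - h ∈ K}

/-- The Hessian `F''(x)` of `F` at `x`, as a continuous linear map. -/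
def Hess (F : E → ℝ) (x : E) : E →L[ℝ] E := fderiv ℝ (fun y => gradient F y) x

/-- The directional third derivative `F'''(x;h)`: the directional derivative of the Hessian
of `F` at `x` in the direction `h`, as a continuous linear map. -/
def D3 (F : E → ℝ) (x h : E) : E →L[ℝ] E := fderiv ℝ (fun y => Hess F y) x h

/-- The local norm `‖h‖ₓ = ⟨F''(x) h, h⟩^{1/2}`. -/
def localNorm (F : E → ℝ) (x h : E) : ℝ := Real.sqrt ⟪Hess F x h, h⟫

/-- `F` is a ϑ-logarithmically homogeneous barrier for `K`: a three times continuously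
differentiable convex function on `int K`, with positive definite Hessians, satisfying
`F (t • x) = F x - ϑ ln t`. -/
structure IsLHB (K : Set E) (ϑ : ℝ) (F : E → ℝ) : Prop where
  contDiff : ContDiffOn ℝ 3 F (interior K)
  convexOn : ConvexOn ℝ (interior K) F
  hess_posdef : ∀ x ∈ interior K, ∀ v : E, v ≠ 0 → 0 < ⟪Hess F x v, v⟫
  log_hom : ∀ x ∈ interior K, ∀ t : ℝ, 0 < t → F (t • x) = F x - ϑ * Real.log t

/-- `F` has negative curvature: `x ↦ ⟨F'(x), u⟩` is concave on `int K` for every `u ∈ K`. -/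
def NegCurv (K : Set E) (F : E → ℝ) : Prop :=
  ∀ u ∈ K, ConcaveOn ℝ (interior K) (fun x => ⟪gradient F x, u⟫)

/-!
For `u ∈ K`, negative curvature says that the derivative of `F` in the direction `u` is concave.
Integrating it over the segment from `z` to `z + u` shows that `z ↦ F (z + u) - F z` is concave
too, so its Hessian `F''(z + u) - F''(z)` is negative semidefinite: `F''` decreases along `K`. When
`β • y - x ∈ K` with `β > 0`, this gives `F''(β • y) ⪯ F''(x)`, and `F''(y) = β² F''(β • y)` by
logarithmic homogeneity. Letting `β` decrease to `σ_y(x)` gives the theorem; passing to the limit,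
instead of using `β = σ_y(x)`, also covers `σ_y(x) = 0`.
-/

open Filter Topology

section SecondDerivative

variable {V W : Type*} [NormedAddCommGroup V] [NormedSpace ℝ V] [NormedAddCommGroup W]
  [NormedSpace ℝ W] {φ ψ : V → W} {f : V → ℝ} {s : Set V} {u x : V}

theorem hasDerivAt_comp_add_smul {v : V} {t : ℝ} (hφ : DifferentiableAt ℝ φ (x + t • v)) :
    HasDerivAt (fun r : ℝ => φ (x + r • v)) (fderiv ℝ φ (x + t • v) v) t := by
  have hline : HasDerivAt (fun r : ℝ => x + r • v) v t := by
    simpa using ((hasDerivAt_id t).smul_const v).const_add x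
  exact hφ.hasFDerivAt.comp_hasDerivAt t hline

theorem differentiableAt_fderiv_of_contDiffAt_two (hφ : ContDiffAt ℝ 2 φ x) :
    DifferentiableAt ℝ (fderiv ℝ φ) x :=
  (hφ.fderiv_right (m := 1) (by norm_num)).differentiableAt one_ne_zero

theorem fderiv_fderiv_comp_add_right (φ : V → W) (u x : V) :
    fderiv ℝ (fderiv ℝ fun z => φ (z + u)) x = fderiv ℝ (fderiv ℝ φ) (x + u) := by
  have hfderiv : fderiv ℝ (fun z => φ (z + u)) = fun z => fderiv ℝ φ (z + u) :=
    funext fun _ => fderiv_comp_add_right u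
  rw [hfderiv, fderiv_comp_add_right]

theorem fderiv_fderiv_comp_smul (φ : V → W) (c : ℝ) (x : V) :
    fderiv ℝ (fderiv ℝ fun z => φ (c • z)) x = c ^ 2 • fderiv ℝ (fderiv ℝ φ) (c • x) := by
  have hfderiv : fderiv ℝ (fun z => φ (c • z)) = c • fun z => fderiv ℝ φ (c • z) :=
    funext fun _ => fderiv_comp_smul c
  rw [hfderiv, fderiv_const_smul_field (F := V →L[ℝ] W), Pi.smul_apply, fderiv_comp_smul,
    smul_smul, sq]

theorem fderiv_fderiv_sub (hφ : ContDiffAt ℝ 2 φ x) (hψ : ContDiffAt ℝ 2 ψ x) :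
    fderiv ℝ (fderiv ℝ fun z => φ z - ψ z) x =
      fderiv ℝ (fderiv ℝ φ) x - fderiv ℝ (fderiv ℝ ψ) x := by
  have hfderiv : fderiv ℝ (fun z => φ z - ψ z) =ᶠ[𝓝 x] fun z => fderiv ℝ φ z - fderiv ℝ ψ z := by
    filter_upwards [hφ.eventually (by simp), hψ.eventually (by simp)] with z hφz hψz
    exact fderiv_fun_sub (hφz.differentiableAt two_ne_zero) (hψz.differentiableAt two_ne_zero)
  rw [hfderiv.fderiv_eq, fderiv_fun_sub (differentiableAt_fderiv_of_contDiffAt_two hφ)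
    (differentiableAt_fderiv_of_contDiffAt_two hψ)]

theorem fderiv_fderiv_eq_sq_smul_of_eventually_comp_smul_eq {c : ℝ} {a : W}
    (hφ : ∀ᶠ z in 𝓝 x, φ (c • z) = φ z - a) :
    fderiv ℝ (fderiv ℝ φ) x = c ^ 2 • fderiv ℝ (fderiv ℝ φ) (c • x) := by
  have hfderiv : fderiv ℝ (fun z => φ z - a) = fderiv ℝ φ := funext fun _ => fderiv_sub_const a
  rw [← fderiv_fderiv_comp_smul, EventuallyEq.fderiv_eq (EventuallyEq.fderiv hφ), hfderiv]

theorem fderiv_fderiv_nonpos_of_concaveOn (hs : IsOpen s) (hf : ContDiffOn ℝ 2 f s)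
    (hconc : ConcaveOn ℝ s f) (hx : x ∈ s) (v : V) : fderiv ℝ (fderiv ℝ f) x v v ≤ 0 := by
  have hfs (z : V) (hz : z ∈ s) : ContDiffAt ℝ 2 f z := hf.contDiffAt (hs.mem_nhds hz)
  let S : Set ℝ := {t | x + t • v ∈ s}
  have hS : IsOpen S := hs.preimage (by fun_prop : Continuous fun t : ℝ => x + t • v)
  have h0 : (0 : ℝ) ∈ S := by simpa [S] using hx
  have hderiv (t : ℝ) (ht : t ∈ S) :
      HasDerivAt (fun r : ℝ => f (x + r • v)) (fderiv ℝ f (x + t • v) v) t :=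
    hasDerivAt_comp_add_smul ((hfs _ ht).differentiableAt two_ne_zero)
  have hconc_line : ConcaveOn ℝ S fun t : ℝ => f (x + t • v) := by
    simpa [S, Function.comp_def, preimage, AffineMap.lineMap_apply, add_comm] using
      hconc.comp_affineMap (AffineMap.lineMap x (x + v))
  have hanti : AntitoneOn (fun t : ℝ => fderiv ℝ f (x + t • v) v) S :=
    (hconc_line.antitoneOn_deriv fun t ht => (hderiv t ht).differentiableAt).congr
      fun t ht => (hderiv t ht).deriv
  have hderiv2 : HasDerivAt (fun t : ℝ => fderiv ℝ f (x + t • v) v)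
      (fderiv ℝ (fderiv ℝ f) x v v) 0 := by
    have h := hasDerivAt_comp_add_smul (v := v) (differentiableAt_fderiv_of_contDiffAt_two
      (hfs _ h0))
    simpa using h.clm_apply (hasDerivAt_const 0 v)
  rw [← hderiv2.deriv, ← derivWithin_of_isOpen hS h0]
  exact hanti.derivWithin_nonpos

theorem concaveOn_comp_add_right_sub_of_concaveOn_fderiv
    (hsu : ∀ z ∈ s, ∀ t ∈ Icc (0 : ℝ) 1, z + t • u ∈ s)
    (hf : ∀ z ∈ s, DifferentiableAt ℝ f z) (hconc : ConcaveOn ℝ s fun z => fderiv ℝ f z u) :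
    ConcaveOn ℝ s fun z => f (z + u) - f z := by
  refine ⟨hconc.1, fun p hp q hq a b ha hb hab => ?_⟩
  have hr : a • p + b • q ∈ s := hconc.1 hp hq ha hb hab
  have hderiv (z : V) (hz : z ∈ s) (t : ℝ) (ht : t ∈ Icc (0 : ℝ) 1) :
      HasDerivAt (fun t : ℝ => f (z + t • u)) (fderiv ℝ f (z + t • u) u) t :=
    hasDerivAt_comp_add_smul (hf _ (hsu z hz t ht))
  let gap : ℝ → ℝ := fun t =>
    f (a • p + b • q + t • u) - (a * f (p + t • u) + b * f (q + t • u))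
  let gap' : ℝ → ℝ := fun t => fderiv ℝ f (a • p + b • q + t • u) u -
    (a * fderiv ℝ f (p + t • u) u + b * fderiv ℝ f (q + t • u) u)
  have hgap (t : ℝ) (ht : t ∈ Icc (0 : ℝ) 1) : HasDerivAt gap (gap' t) t :=
    (hderiv _ hr t ht).sub
      (((hderiv p hp t ht).const_mul a).add ((hderiv q hq t ht).const_mul b))
  have hgap'_nonneg (t : ℝ) (ht : t ∈ Icc (0 : ℝ) 1) : 0 ≤ gap' t := by
    have hcomb : a • (p + t • u) + b • (q + t • u) = a • p + b • q + t • u := by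
      rw [smul_add, smul_add, add_add_add_comm, Convex.combo_self hab]
    have h := hconc.2 (hsu p hp t ht) (hsu q hq t ht) ha hb hab
    rw [hcomb] at h
    exact sub_nonneg.2 h
  obtain ⟨t, ht, hslope⟩ := exists_hasDerivAt_eq_slope gap gap' zero_lt_one
    (fun t ht => (hgap t ht).continuousAt.continuousWithinAt)
    (fun t ht => hgap t (Ioo_subset_Icc_self ht))
  have hle : 0 ≤ gap 1 - gap 0 := by
    simpa [hslope] using hgap'_nonneg t (Ioo_subset_Icc_self ht)
  simp only [gap, zero_smul, one_smul, add_zero] at hle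
  simp only [smul_eq_mul]
  linarith

theorem fderiv_fderiv_add_le_of_concaveOn_fderiv (hs : IsOpen s) (hf : ContDiffOn ℝ 2 f s)
    (hsu : ∀ z ∈ s, ∀ t ∈ Icc (0 : ℝ) 1, z + t • u ∈ s)
    (hconc : ConcaveOn ℝ s fun z => fderiv ℝ f z u) (hx : x ∈ s) (v : V) :
    fderiv ℝ (fderiv ℝ f) (x + u) v v ≤ fderiv ℝ (fderiv ℝ f) x v v := by
  have hfs (z : V) (hz : z ∈ s) : ContDiffAt ℝ 2 f z := hf.contDiffAt (hs.mem_nhds hz)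
  have hfsu (z : V) (hz : z ∈ s) : ContDiffAt ℝ 2 (fun w => f (w + u)) z :=
    (hfs (z + u) (by simpa using hsu z hz 1 (by simp))).comp z
      (contDiffAt_id.add contDiffAt_const)
  have hincr : ConcaveOn ℝ s fun z => f (z + u) - f z :=
    concaveOn_comp_add_right_sub_of_concaveOn_fderiv hsu
      (fun z hz => (hfs z hz).differentiableAt two_ne_zero) hconc
  have hnonpos := fderiv_fderiv_nonpos_of_concaveOn hs
    (fun z hz => ((hfsu z hz).sub (hfs z hz)).contDiffWithinAt) hincr hx v
  rw [fderiv_fderiv_sub (hfsu x hx) (hfs x hx), fderiv_fderiv_comp_add_right] at hnonpos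
  exact sub_nonpos.1 hnonpos

end SecondDerivative

section Cone

variable {V : Type*} [AddCommGroup V] [Module ℝ V] [TopologicalSpace V] [IsTopologicalAddGroup V]

open scoped Pointwise in
theorem add_mem_interior_convexCone (K : ConvexCone ℝ V) {x u : V}
    (hx : x ∈ interior (K : Set V)) (hu : u ∈ K) : x + u ∈ interior (K : Set V) := by
  have hadd : (K : Set V) + K ⊆ K := add_subset_iff.2 fun _ hp _ hq => K.add_mem hp hq
  exact interior_mono hadd (subset_interior_add_left (add_mem_add hx hu))

theorem exists_pos_smul_sub_mem_convexCone [ContinuousSMul ℝ V] (K : ConvexCone ℝ V)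
    {y : V} (hy : y ∈ interior (K : Set V)) (x : V) : ∃ β : ℝ, 0 < β ∧ β • y - x ∈ K := by
  have htendsto : Tendsto (fun ε : ℝ => y - ε • x) (𝓝[>] 0) (𝓝 y) := by
    have hcont : Continuous fun ε : ℝ => y - ε • x := by fun_prop
    simpa using (hcont.tendsto 0).mono_left nhdsWithin_le_nhds
  obtain ⟨ε, hεK, hε⟩ :=
    ((htendsto.eventually (mem_interior_iff_mem_nhds.1 hy)).and self_mem_nhdsWithin).exists
  have hε_pos : 0 < ε := hε
  refine ⟨ε⁻¹, inv_pos.2 hε_pos, ?_⟩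
  simpa [smul_sub, smul_smul, hε_pos.ne'] using K.smul_mem (inv_pos.2 hε_pos) hεK

end Cone

section Gauge

variable {H : Type*} [NormedAddCommGroup H] [InnerProductSpace ℝ H] {x y : H}

/-- The convex cone underlying a regular cone, bundled so that the `ConvexCone` API applies;
closedness, pointedness and the vertex `0 ∈ K` are forgotten. -/
def IsRegularCone.toConvexCone {K : Set H} (hK : IsRegularCone K) : ConvexCone ℝ H where
  carrier := K
  smul_mem' t ht x hx := hK.2.2.1 x hx t ht.le
  add_mem' x hx y hy := by
    have hmid := hK.2.1 hx hy one_half_pos.le one_half_pos.le (add_halves 1)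
    simpa [smul_smul] using hK.2.2.1 _ hmid 2 zero_le_two

theorem mink_nonneg (K : Set H) (y x : H) : 0 ≤ mink K y x :=
  Real.sInf_nonneg fun _ hβ => hβ.1

theorem mink_le {K : Set H} {β : ℝ} (hβ : 0 ≤ β) (hmem : β • y - x ∈ K) : mink K y x ≤ β :=
  csInf_le ⟨0, fun _ hγ => hγ.1⟩ ⟨hβ, hmem⟩

theorem smul_sub_mem_of_mink_lt (K : ConvexCone ℝ H) (hy : y ∈ interior (K : Set H)) {β : ℝ}
    (hβ : mink K y x < β) : β • y - x ∈ K := by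
  obtain ⟨γ₀, hγ₀, hmem₀⟩ := exists_pos_smul_sub_mem_convexCone K hy x
  have hne : {γ : ℝ | 0 ≤ γ ∧ γ • y - x ∈ (K : Set H)}.Nonempty := ⟨γ₀, hγ₀.le, hmem₀⟩
  obtain ⟨γ, ⟨-, hγ⟩, hγβ⟩ := exists_lt_of_csInf_lt hne hβ
  have hdiff : (β - γ) • y ∈ K := K.smul_mem (sub_pos.2 hγβ) (interior_subset hy)
  convert K.add_mem hdiff hγ using 1
  module

end Gauge

section Hessian

variable {F : E → ℝ} {x y : E}

theorem inner_hess_left (F : E → ℝ) (x v w : E) :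
    ⟪Hess F x v, w⟫ = fderiv ℝ (fderiv ℝ F) x v w := by
  let riesz : StrongDual ℝ E ≃L[ℝ] E := (InnerProductSpace.toDual ℝ E).symm.toContinuousLinearEquiv
  have hHess : Hess F x = (riesz : StrongDual ℝ E →L[ℝ] E).comp (fderiv ℝ (fderiv ℝ F) x) :=
    riesz.comp_fderiv
  rw [hHess]
  exact InnerProductSpace.toDual_symm_apply

theorem inner_hess_le_of_sub_mem (K : ConvexCone ℝ E)
    (hF : ContDiffOn ℝ 2 F (interior K)) (hNC : NegCurv K F)
    (hx : x ∈ interior (K : Set E)) (hyx : y - x ∈ K) (v : E) :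
    ⟪Hess F y v, v⟫ ≤ ⟪Hess F x v, v⟫ := by
  have hshift (z : E) (hz : z ∈ interior (K : Set E)) (t : ℝ) (ht : t ∈ Icc (0 : ℝ) 1) :
      z + t • (y - x) ∈ interior (K : Set E) := by
    rcases ht.1.eq_or_lt with rfl | htpos
    · simpa using hz
    · exact add_mem_interior_convexCone K hz (K.smul_mem htpos hyx)
  have hconc : ConcaveOn ℝ (interior (K : Set E)) fun z => fderiv ℝ F z (y - x) := by
    simpa only [inner_gradient_left] using hNC (y - x) hyx
  simpa only [inner_hess_left, add_sub_cancel] using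
    fderiv_fderiv_add_le_of_concaveOn_fderiv isOpen_interior hF hshift hconc hx v

theorem inner_hess_eq_sq_mul_of_eventually_comp_smul_eq {a t : ℝ}
    (hhom : ∀ᶠ z in 𝓝 y, F (t • z) = F z - a) (v : E) :
    ⟪Hess F y v, v⟫ = t ^ 2 * ⟪Hess F (t • y) v, v⟫ := by
  rw [inner_hess_left, inner_hess_left, fderiv_fderiv_eq_sq_smul_of_eventually_comp_smul_eq hhom]
  rfl

end Hessian

theorem stmt4_general (K : ConvexCone ℝ E) (ϑ : ℝ) (F : E → ℝ)
    (hF : ContDiffOn ℝ 2 F (interior K))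
    (hlog : ∀ z ∈ interior (K : Set E), ∀ t : ℝ, 0 < t → F (t • z) = F z - ϑ * Real.log t)
    (hNC : NegCurv K F) (x : E) (hx : x ∈ interior (K : Set E))
    (y : E) (hy : y ∈ interior (K : Set E)) :
    (∀ v, ⟪Hess F y v, v⟫ ≤ (mink K y x) ^ 2 * ⟪Hess F x v, v⟫) ∧
    (y - x ∈ K → mink K y x ≤ 1 ∧ ∀ v, ⟪Hess F y v, v⟫ ≤ ⟪Hess F x v, v⟫) := by
  refine ⟨fun v => ?_, fun hyx => ⟨mink_le zero_le_one (by simpa using hyx),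
    inner_hess_le_of_sub_mem K hF hNC hx hyx⟩⟩
  have hbound (β : ℝ) (hβ : mink K y x < β) :
      ⟪Hess F y v, v⟫ ≤ β ^ 2 * ⟪Hess F x v, v⟫ := by
    have hβ_pos : 0 < β := (mink_nonneg _ _ _).trans_lt hβ
    have hlog_near : ∀ᶠ z in 𝓝 y, F (β • z) = F z - ϑ * Real.log β :=
      eventually_of_mem (isOpen_interior.mem_nhds hy) fun z hz => hlog z hz β hβ_pos
    calc ⟪Hess F y v, v⟫
        = β ^ 2 * ⟪Hess F (β • y) v, v⟫ :=
          inner_hess_eq_sq_mul_of_eventually_comp_smul_eq hlog_near v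
      _ ≤ β ^ 2 * ⟪Hess F x v, v⟫ := by
          gcongr
          exact inner_hess_le_of_sub_mem K hF hNC hx (smul_sub_mem_of_mink_lt K hy hβ) v
  have hcont : Continuous fun β : ℝ => β ^ 2 * ⟪Hess F x v, v⟫ := by fun_prop
  exact ge_of_tendsto ((hcont.tendsto _).mono_left nhdsWithin_le_nhds)
    (eventually_nhdsWithin_of_forall (s := Ioi (mink (K : Set E) y x)) hbound)

/-- For a logarithmically homogeneous barrier `F` with negative curvature on a
regular cone `K`, for all `x, y ∈ int K`, `F''(y) ⪯ σ_y(x)² F''(x)`; in particular, if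
`y − x ∈ K` then `σ_y(x) ≤ 1` and `F''(y) ⪯ F''(x)` (matrix inequalities as quadratic forms). -/
theorem stmt4 {n : ℕ} (K : Set (EuclideanSpace ℝ (Fin n))) (ϑ : ℝ)
    (F : EuclideanSpace ℝ (Fin n) → ℝ)
    (hK : IsRegularCone K) (hF : IsLHB K ϑ F) (hNC : NegCurv K F)
    (x : EuclideanSpace ℝ (Fin n)) (hx : x ∈ interior K)
    (y : EuclideanSpace ℝ (Fin n)) (hy : y ∈ interior K) :
    (∀ v, ⟪Hess F y v, v⟫ ≤ (mink K y x)^2 * ⟪Hess F x v, v⟫) ∧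
    (y - x ∈ K → mink K y x ≤ 1 ∧ ∀ v, ⟪Hess F y v, v⟫ ≤ ⟪Hess F x v, v⟫) :=
  stmt4_general hK.toConvexCone ϑ F (hF.contDiff.of_le (by norm_num)) hF.log_hom hNC x hx y hy
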